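/- Let X and Y be finite-dimensional real inner product spaces (hence Hilbert), K : X → Y a continuous linear operator with adjoint K*, A a maximally monotone set-valued operator on X and B a maximally monotone set-valued operator on Y. Let σ, τ > 0 satisfy στ < 1, and assume the primal-dual system (5) has a solution. Let sequences (x^n), (y^n), (u^n), (v^n), (x̄^n), (ȳ^n) satisfy x̄^0 = x^0, ȳ^0 = y^0 and, for every n ≥ 0: (σ^{-1}(u^n + σ x̄^n − u^{n+1}), u^{n+1}) ∈ A; (v^{n+1}, σ^{-1}(v^n + σ ȳ^n − v^{n+1})) ∈ B; x^{n+1} + τ² K*(K x^{n+1}) = x^n − τ u^{n+1} − τ K*(y^n − τ v^{n+1}); y^{n+1} + τ² K(K* y^{n+1}) = y^n − τ v^{n+1} + τ K(x^n − τ u^{n+1}); x̄^{n+1} = 2x^{n+1} − x^n and ȳ^{n+1} = 2y^{n+1} − y^n. Then there exists a pair (x*, y*) with (K x*, y*) ∈ B and (x*, −K* y*) ∈ A such that x^n → x* and y^n → y*. -/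

import Mathlib

/-!
On the product space `Z = X × Y` put `z = (x, y)`, `w = (u, v)`, let `S (x, y) = (K* y, -K x)`, which is
skew, and let `M = A⁻¹ × B`, which is maximally monotone. The two coupled linear updates say exactly
`(Id + τ S) zⁿ⁺¹ = zⁿ - τ wⁿ⁺¹`, and the resolvent updates say
`σ⁻¹ (wⁿ - wⁿ⁺¹) + 2 zⁿ - zⁿ⁻¹ ∈ M wⁿ⁺¹`. The primal-dual system becomes `z ∈ M (-S z)`.

The shifted pair `(zⁿ, wⁿ⁺¹)` is thus generated by the proximal point algorithm in the metric given by the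
quadratic form `pdForm`, `(a, b) ↦ σ‖a‖² - 2στ⟪a, b⟫ + τ‖b‖²`, which is positive definite because
`στ < 1` (`pdForm_ge_left`, `pdForm_ge_right`). Monotonicity gives the Fejér inequality `pdForm_fejer`
towards every solution. Hence the iterates are bounded and successive differences vanish; since the graph
of `M` is closed, every cluster point is a solution, and Fejér monotonicity towards that cluster point gives
convergence of the whole sequence (`skew_pdhg_tendsto`).
-/

open RealInnerProductSpace Filter

/-- A set-valued operator, identified with its graph, is monotone. -/
def IsMonotoneOp {Z : Type*} [NormedAddCommGroup Z] [InnerProductSpace ℝ Z]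
    (A : Set (Z × Z)) : Prop :=
  ∀ p ∈ A, ∀ q ∈ A, (0:ℝ) ≤ ⟪p.1 - q.1, p.2 - q.2⟫

/-- A set-valued operator is maximally monotone. -/
def IsMaxMonotoneOp {Z : Type*} [NormedAddCommGroup Z] [InnerProductSpace ℝ Z]
    (A : Set (Z × Z)) : Prop :=
  IsMonotoneOp A ∧ ∀ B : Set (Z × Z), IsMonotoneOp B → A ⊆ B → B = A

section PrimalDual

variable {Z : Type*} [NormedAddCommGroup Z] [InnerProductSpace ℝ Z]

/-- The quadratic form of the primal-dual metric, scaled by `στ` to avoid the divisions in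
`τ⁻¹‖a‖² - 2⟪a, b⟫ + σ⁻¹‖b‖²`. -/
noncomputable def pdForm (σ τ : ℝ) (a b : Z) : ℝ :=
  σ * ⟪a, a⟫ - 2 * σ * τ * ⟪a, b⟫ + τ * ⟪b, b⟫

lemma pdForm_ge_left {σ τ : ℝ} (hτ : 0 < τ) (a b : Z) :
    σ * (1 - σ * τ) * ‖a‖ ^ 2 ≤ pdForm σ τ a b := by
  -- the form is `σ (1 - στ) ‖a‖² + τ ‖b - σ a‖²`
  have h : 0 ≤ τ * ⟪b - σ • a, b - σ • a⟫ := mul_nonneg hτ.le real_inner_self_nonneg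
  simp only [inner_sub_left, inner_sub_right, real_inner_smul_left, real_inner_smul_right,
    real_inner_comm a b] at h
  unfold pdForm
  rw [← real_inner_self_eq_norm_sq]
  have e := real_inner_comm a b
  nlinarith

lemma pdForm_ge_right {σ τ : ℝ} (hσ : 0 < σ) (a b : Z) :
    τ * (1 - σ * τ) * ‖b‖ ^ 2 ≤ pdForm σ τ a b := by
  have h := pdForm_ge_left (σ := τ) hσ b a
  unfold pdForm at *
  rw [real_inner_comm b a]
  linarith

/-- One step of the iteration, written in differences to a solution: `a, b` are the errors of `z, w` before
the step and `a', b'` those after it. -/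
lemma pdForm_fejer {σ τ : ℝ} (hσ : 0 < σ) (hτ : 0 < τ) (a b a' b' s : Z)
    (hs : ⟪s, a'⟫ = 0) (hstep : a - a' = τ • (s + b))
    (hmono : 0 ≤ ⟪b', σ⁻¹ • (b - b') + ((2:ℝ) • a' - a)⟫) :
    pdForm σ τ a' b' + pdForm σ τ (a' - a) (b' - b) ≤ pdForm σ τ a b := by
  have h1 : ⟪a - a', a'⟫ = τ * ⟪b, a'⟫ := by
    rw [hstep, real_inner_smul_left, inner_add_left, hs, zero_add]
  have h2 : 0 ≤ τ * σ * ⟪b', σ⁻¹ • (b - b') + ((2:ℝ) • a' - a)⟫ := by positivity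
  have h3 : τ * σ * ⟪b', σ⁻¹ • (b - b') + ((2:ℝ) • a' - a)⟫
      = τ * (⟪b', b⟫ - ⟪b', b'⟫) + τ * σ * (2 * ⟪b', a'⟫ - ⟪b', a⟫) := by
    simp only [inner_add_right, inner_sub_right, real_inner_smul_right]
    field_simp
  rw [h3] at h2
  unfold pdForm
  simp only [inner_sub_left, inner_sub_right] at h1 ⊢
  rw [real_inner_comm a a', real_inner_comm b b', real_inner_comm a b', real_inner_comm a' b'] at *
  rw [real_inner_comm a' b] at *
  have h4 : σ * _ = σ * _ := congrArg (σ * ·) h1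
  linarith

/-- By maximality the graph is the set of all pairs monotonically related to each of its points. -/
lemma IsMaxMonotoneOp.isClosed {A : Set (Z × Z)} (hA : IsMaxMonotoneOp A) : IsClosed A := by
  have h : A = ⋂ q ∈ A, {p : Z × Z | (0:ℝ) ≤ ⟪p.1 - q.1, p.2 - q.2⟫} := by
    ext p
    simp only [Set.mem_iInter, Set.mem_ofPred_eq]
    refine ⟨fun hp q hq => hA.1 p hp q hq, fun hp => ?_⟩
    have hm : IsMonotoneOp (insert p A) := by
      rintro a (rfl | ha) b (rfl | hb)
      · simp
      · exact hp b hb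
      · have := hp a ha
        rwa [← neg_sub a.1, ← neg_sub a.2, inner_neg_neg] at this
      · exact hA.1 a ha b hb
    rw [← hA.2 _ hm (Set.subset_insert p A)]
    exact Set.mem_insert p A
  rw [h]
  refine isClosed_biInter fun q _ => isClosed_le continuous_const ?_
  fun_prop

lemma smul_resolvent_residual {σ : ℝ} (hσ : σ ≠ 0) (a b c : Z) :
    σ⁻¹ • (a + σ • c - b) = σ⁻¹ • (a - b) + c := by
  rw [add_sub_right_comm, smul_add, inv_smul_smul₀ hσ]

lemma tendsto_zero_of_mul_norm_sq_le {Z : Type*} [NormedAddCommGroup Z] {c : ℝ} (hc : 0 < c) {f : ℕ → Z} {g : ℕ → ℝ}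
    (hfg : ∀ n, c * ‖f n‖ ^ 2 ≤ g n) (hg : Tendsto g atTop (nhds 0)) :
    Tendsto f atTop (nhds 0) := by
  have h1 : Tendsto (fun n => ‖f n‖ ^ 2) atTop (nhds 0) := by
    have h2 : Tendsto (fun n => g n / c) atTop (nhds 0) := by simpa using hg.div_const c
    refine squeeze_zero (fun n => by positivity) (fun n => ?_) h2
    rw [le_div_iff₀ hc, mul_comm]
    exact hfg n
  have h3 := h1.sqrt
  simp only [Real.sqrt_sq (norm_nonneg _), Real.sqrt_zero] at h3
  exact tendsto_zero_iff_norm_tendsto_zero.2 h3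

/-- Convergence of the primal-dual iteration for a skew operator `S` and a monotone operator `M` with closed
graph. The sequence `w` is indexed so that `(z n, w n)` is the state of the underlying proximal point
algorithm. -/
lemma skew_pdhg_tendsto [FiniteDimensional ℝ Z] (S : Z →ₗ[ℝ] Z) (hS : ∀ a, ⟪S a, a⟫ = 0)
    (M : Set (Z × Z)) (hM : IsMonotoneOp M) (hMc : IsClosed M)
    {σ τ : ℝ} (hσ : 0 < σ) (hτ : 0 < τ) (hστ : σ * τ < 1)
    (hsol : ∃ zh, (-S zh, zh) ∈ M) (z w : ℕ → Z)
    (hw : ∀ n, (w (n+1), σ⁻¹ • (w n - w (n+1)) + ((2:ℝ) • z (n+1) - z n)) ∈ M)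
    (hz : ∀ n, z (n+1) + τ • S (z (n+1)) = z n - τ • w n) :
    ∃ zs, (-S zs, zs) ∈ M ∧ Tendsto z atTop (nhds zs) := by
  have hSc : Continuous S := S.continuous_of_finiteDimensional
  have hc1 : 0 < σ * (1 - σ * τ) := mul_pos hσ (by linarith)
  have hc2 : 0 < τ * (1 - σ * τ) := mul_pos hτ (by linarith)
  have hnn : ∀ a b : Z, 0 ≤ pdForm σ τ a b := fun a b =>
    le_trans (by positivity) (pdForm_ge_left hτ a b)
  have fejer : ∀ zs, (-S zs, zs) ∈ M → ∀ n,
      pdForm σ τ (z (n+1) - zs) (w (n+1) - -S zs) + pdForm σ τ (z (n+1) - z n) (w (n+1) - w n)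
        ≤ pdForm σ τ (z n - zs) (w n - -S zs) := by
    intro zs hzs n
    have h := pdForm_fejer hσ hτ (z n - zs) (w n - -S zs) (z (n+1) - zs) (w (n+1) - -S zs)
      (S (z (n+1) - zs)) (hS _) ?_ ?_
    · simpa only [sub_sub_sub_cancel_right] using h
    · have e : z n = z (n+1) + τ • S (z (n+1)) + τ • w n := by rw [hz n]; abel
      rw [map_sub, sub_sub_sub_cancel_right]
      nth_rewrite 1 [e]
      module
    · convert hM _ (hw n) _ hzs using 2
      module
  have anti : ∀ zs, (-S zs, zs) ∈ M →
      Antitone fun n => pdForm σ τ (z n - zs) (w n - -S zs) := fun zs hzs =>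
    antitone_nat_of_succ_le fun n => by linarith [fejer zs hzs n, hnn (z (n+1) - z n) (w (n+1) - w n)]
  obtain ⟨zh, hzh⟩ := hsol
  -- the decrements of the Fejér functional vanish, hence so do the successive differences
  have hd : Tendsto (fun n => pdForm σ τ (z (n+1) - z n) (w (n+1) - w n)) atTop (nhds 0) := by
    have hl := tendsto_atTop_ciInf (anti zh hzh) ⟨0, by rintro _ ⟨n, rfl⟩; exact hnn _ _⟩
    have hl' := hl.sub ((tendsto_add_atTop_iff_nat 1).2 hl)
    rw [sub_self] at hl'
    exact squeeze_zero (fun n => hnn _ _) (fun n => by linarith [fejer zh hzh n]) hl'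
  have hdz := tendsto_zero_of_mul_norm_sq_le hc1 (fun n => pdForm_ge_left hτ _ _) hd
  have hdw := tendsto_zero_of_mul_norm_sq_le hc2 (fun n => pdForm_ge_right hσ _ _) hd
  have bdd : ∀ {c : ℝ} (f : ℕ → Z) (p : Z), 0 < c →
      (∀ n, c * ‖f n - p‖ ^ 2 ≤ pdForm σ τ (z 0 - zh) (w 0 - -S zh)) →
      ∃ R, ∀ n, f n ∈ Metric.closedBall p R := by
    intro c f p hc h
    refine ⟨Real.sqrt (pdForm σ τ (z 0 - zh) (w 0 - -S zh) / c), fun n => ?_⟩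
    rw [mem_closedBall_iff_norm]
    apply Real.le_sqrt_of_sq_le
    rw [le_div_iff₀ hc, mul_comm]
    exact h n
  obtain ⟨R1, hR1⟩ := bdd z zh hc1 fun n =>
    (pdForm_ge_left hτ _ _).trans (anti zh hzh (Nat.zero_le n))
  obtain ⟨R2, hR2⟩ := bdd w (-S zh) hc2 fun n =>
    (pdForm_ge_right hσ _ _).trans (anti zh hzh (Nat.zero_le n))
  have : ProperSpace Z := FiniteDimensional.proper ℝ Z
  obtain ⟨⟨zs, ws⟩, -, φ, hφ, hlim⟩ :=
    ((isCompact_closedBall zh R1).prod (isCompact_closedBall (-S zh) R2)).tendsto_subseq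
      (x := fun n => (z n, w n)) fun n => ⟨hR1 n, hR2 n⟩
  have hzl : Tendsto (fun n => z (φ n)) atTop (nhds zs) := (continuous_fst.tendsto _).comp hlim
  have hwl : Tendsto (fun n => w (φ n)) atTop (nhds ws) := (continuous_snd.tendsto _).comp hlim
  have hdz' := hdz.comp hφ.tendsto_atTop
  have hdw' := hdw.comp hφ.tendsto_atTop
  have hz1 : Tendsto (fun n => z (φ n + 1)) atTop (nhds zs) := by
    simpa [Function.comp_def] using hdz'.add hzl
  have hw1 : Tendsto (fun n => w (φ n + 1)) atTop (nhds ws) := by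
    simpa [Function.comp_def] using hdw'.add hwl
  have hws : ws = -S zs := by
    have h1 := hz1.add (((hSc.tendsto zs).comp hz1).const_smul τ)
    have h2 := hzl.sub (hwl.const_smul τ)
    have h3 := tendsto_nhds_unique h1 (h2.congr fun n => (hz (φ n)).symm)
    have h4 : τ • (ws + S zs) = 0 := by
      have : τ • (ws + S zs) = (zs + τ • S zs) - (zs - τ • ws) := by module
      rw [this, h3, sub_self]
    exact eq_neg_of_add_eq_zero_left ((smul_eq_zero.1 h4).resolve_left hτ.ne')
  subst hws
  have hzs : (-S zs, zs) ∈ M := by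
    have h1 := ((hwl.sub hw1).const_smul σ⁻¹).add ((hz1.const_smul (2:ℝ)).sub hzl)
    have h2 := hMc.mem_of_tendsto (hw1.prodMk_nhds h1) (Eventually.of_forall fun n => hw (φ n))
    have e : σ⁻¹ • (-S zs - -S zs) + ((2:ℝ) • zs - zs) = zs := by module
    rwa [e] at h2
  refine ⟨zs, hzs, ?_⟩
  have hV : Tendsto (fun n => pdForm σ τ (z n - zs) (w n - -S zs)) atTop (nhds 0) := by
    have hl := tendsto_atTop_ciInf (anti zs hzs) ⟨0, by rintro _ ⟨n, rfl⟩; exact hnn _ _⟩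
    have hcont : Continuous fun p : Z × Z => pdForm σ τ (p.1 - zs) (p.2 - -S zs) := by
      unfold pdForm; fun_prop
    have h0 := (hcont.tendsto _).comp hlim
    have h1 := tendsto_nhds_unique (hl.comp hφ.tendsto_atTop) h0
    rw [h1] at hl
    simpa [pdForm] using hl
  have h := tendsto_zero_of_mul_norm_sq_le hc1 (fun n => pdForm_ge_left hτ _ _) hV
  simpa using h.add_const zs

end PrimalDual

/-- The decoupled normal equations are equivalent to the coupled system
`x + τ K* y = a`, `y - τ K x = b`; only this direction is needed. -/
lemma coupled_of_decoupled {X Y : Type*} [NormedAddCommGroup X] [InnerProductSpace ℝ X]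
    [NormedAddCommGroup Y] [InnerProductSpace ℝ Y] (K : X →L[ℝ] Y) (Kadj : Y →L[ℝ] X)
    (hadj : ∀ (x : X) (y : Y), ⟪Kadj y, x⟫ = ⟪y, K x⟫) (τ : ℝ) {x a : X} {y b : Y}
    (hx : x + (τ^2) • Kadj (K x) = a - τ • Kadj b)
    (hy : y + (τ^2) • K (Kadj y) = b + τ • K a) :
    x + τ • Kadj y = a ∧ y - τ • K x = b := by
  -- the residuals satisfy `e = τ K* f` and `f = -τ K e`, so `‖e‖² = -‖f‖²`
  obtain ⟨e, he⟩ : ∃ e, e = x + τ • Kadj y - a := ⟨_, rfl⟩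
  obtain ⟨f, hf⟩ : ∃ f, f = y - τ • K x - b := ⟨_, rfl⟩
  have h1 : e = τ • Kadj f := by
    have : e - τ • Kadj f = (x + (τ^2) • Kadj (K x)) - (a - τ • Kadj b) := by
      rw [he, hf]; simp only [map_sub, map_smul]; module
    rw [hx, sub_self] at this
    exact sub_eq_zero.1 this
  have h2 : f = -(τ • K e) := by
    have : f + τ • K e = (y + (τ^2) • K (Kadj y)) - (b + τ • K a) := by
      rw [he, hf]; simp only [map_sub, map_add, map_smul]; module
    rw [hy, sub_self] at this
    exact eq_neg_of_add_eq_zero_left this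
  have h3 : ⟪e, e⟫ = -⟪f, f⟫ := by
    calc ⟪e, e⟫ = ⟪τ • Kadj f, e⟫ := by rw [← h1]
      _ = ⟪f, τ • K e⟫ := by rw [real_inner_smul_left, hadj, real_inner_smul_right]
      _ = -⟪f, f⟫ := by rw [← neg_neg (τ • K e), ← h2, inner_neg_right]
  have h4 : ⟪e, e⟫ = 0 := by
    linarith [real_inner_self_nonneg (x := e), real_inner_self_nonneg (x := f)]
  have h5 : e = 0 := inner_self_eq_zero.1 h4
  have h6 : f = 0 := by rw [h2, h5]; simp
  exact ⟨sub_eq_zero.1 (he ▸ h5), sub_eq_zero.1 (hf ▸ h6)⟩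

theorem stmt_7
    {X Y : Type*} [NormedAddCommGroup X] [InnerProductSpace ℝ X] [FiniteDimensional ℝ X]
    [NormedAddCommGroup Y] [InnerProductSpace ℝ Y] [FiniteDimensional ℝ Y]
    (K : X →L[ℝ] Y) (Kadj : Y →L[ℝ] X)
    (hadj : ∀ (x : X) (y : Y), ⟪Kadj y, x⟫ = ⟪y, K x⟫)
    (A : Set (X × X)) (B : Set (Y × Y))
    (hA : IsMaxMonotoneOp A) (hB : IsMaxMonotoneOp B)
    (σ τ : ℝ) (hσ : 0 < σ) (hτ : 0 < τ) (hστ : σ * τ < 1)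
    (hsol : ∃ (xh : X) (yh : Y), (K xh, yh) ∈ B ∧ (xh, -Kadj yh) ∈ A)
    (x xb u : ℕ → X) (y yb v : ℕ → Y)
    (hxb0 : xb 0 = x 0) (hyb0 : yb 0 = y 0)
    (hu : ∀ n : ℕ, (σ⁻¹ • (u n + σ • xb n - u (n+1)), u (n+1)) ∈ A)
    (hv : ∀ n : ℕ, (v (n+1), σ⁻¹ • (v n + σ • yb n - v (n+1))) ∈ B)
    (hx : ∀ n : ℕ, x (n+1) + (τ^2) • Kadj (K (x (n+1)))
        = x n - τ • u (n+1) - τ • Kadj (y n - τ • v (n+1)))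
    (hy : ∀ n : ℕ, y (n+1) + (τ^2) • K (Kadj (y (n+1)))
        = y n - τ • v (n+1) + τ • K (x n - τ • u (n+1)))
    (hxbn : ∀ n : ℕ, xb (n+1) = (2:ℝ) • x (n+1) - x n)
    (hybn : ∀ n : ℕ, yb (n+1) = (2:ℝ) • y (n+1) - y n) :
    ∃ (xs : X) (ys : Y), (K xs, ys) ∈ B ∧ (xs, -Kadj ys) ∈ A ∧
      Tendsto x atTop (nhds xs) ∧ Tendsto y atTop (nhds ys) := by
  have hlin := fun n => coupled_of_decoupled K Kadj hadj τ
    (x := x (n+1)) (y := y (n+1)) (a := x n - τ • u (n+1)) (b := y n - τ • v (n+1)) (hx n) (hy n)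
  let S : WithLp 2 (X × Y) →ₗ[ℝ] WithLp 2 (X × Y) :=
    { toFun := fun p => WithLp.toLp 2 (Kadj p.snd, -K p.fst)
      map_add' := fun p q => by
        apply (WithLp.equiv 2 (X × Y)).injective
        ext <;> simp
        abel
      map_smul' := fun c p => by
        apply (WithLp.equiv 2 (X × Y)).injective
        ext <;> simp }
  -- the graph of `A⁻¹ × B`
  let M : Set (WithLp 2 (X × Y) × WithLp 2 (X × Y)) :=
    {p | (p.2.fst, p.1.fst) ∈ A ∧ (p.1.snd, p.2.snd) ∈ B}
  have hS : ∀ p, ⟪S p, p⟫ = 0 := by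
    intro p
    simp only [S, LinearMap.coe_mk, AddHom.coe_mk, WithLp.prod_inner_apply]
    simp [hadj, real_inner_comm]
  have hM : IsMonotoneOp M := by
    rintro p ⟨hp1, hp2⟩ q ⟨hq1, hq2⟩
    have h1 := hA.1 _ hp1 _ hq1
    have h2 := hB.1 _ hp2 _ hq2
    rw [real_inner_comm] at h1
    rw [WithLp.prod_inner_apply]
    exact add_nonneg h1 h2
  have hMc : IsClosed M := by
    refine IsClosed.inter (hA.isClosed.preimage ?_) (hB.isClosed.preimage ?_) <;> fun_prop
  obtain ⟨xh, yh, hBh, hAh⟩ := hsol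
  obtain ⟨zs, hzs, hlim⟩ := skew_pdhg_tendsto S hS M hM hMc hσ hτ hστ
    ⟨WithLp.toLp 2 (xh, yh), by simpa [M, S] using ⟨hAh, hBh⟩⟩
    (fun n => WithLp.toLp 2 (x n, y n)) (fun n => WithLp.toLp 2 (u (n+1), v (n+1)))
    (fun n => by
      have h1 := hu (n+1)
      have h2 := hv (n+1)
      rw [hxbn, smul_resolvent_residual hσ.ne'] at h1
      rw [hybn, smul_resolvent_residual hσ.ne'] at h2
      exact ⟨h1, h2⟩)
    (fun n => by
      apply (WithLp.equiv 2 (X × Y)).injective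
      ext
      · simpa [S] using (hlin n).1
      · simpa [S, sub_eq_add_neg] using (hlin n).2)
  have hmem : (zs.fst, -Kadj zs.snd) ∈ A ∧ (K zs.fst, zs.snd) ∈ B := by simpa [M, S] using hzs
  have hf : Continuous fun p : WithLp 2 (X × Y) => p.fst := by fun_prop
  have hs : Continuous fun p : WithLp 2 (X × Y) => p.snd := by fun_prop
  exact ⟨zs.fst, zs.snd, hmem.2, hmem.1, (hf.tendsto zs).comp hlim, (hs.tendsto zs).comp hlim⟩
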